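/- In Case (B) (s = −1), for every x ∈ ℤ₊ the limit P_*^{(E)}(x) = lim_{t→∞} P(X_{2t} = x) exists and is given by: P_*^{(E)}(0) = ((κ−2)/(κ−1))²; P_*^{(E)}(x) = κ·((κ−2)/(κ−1))²·(1/(κ−1))^x for even x ≥ 2; and P_*^{(E)}(x) = 0 for odd x. -/

import Mathlib

open Filter Topology

noncomputable section

/-- Half-line quantum walk `Ψ_t(x) = (Ψ_t^L(x), Ψ_t^R(x))` with a reflecting wall at the
origin, coin parameters `a`, `b` and wall sign `s`:
`Ψ_0(0) = (1,0)`, `Ψ_0(x) = (0,0)` for `x ≥ 1`, and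
`Ψ_{t+1}^L(x) = a·Ψ_t^L(x+1) − b·Ψ_t^R(x+1)`,
`Ψ_{t+1}^R(x) = b·Ψ_t^L(x−1) + a·Ψ_t^R(x−1)` for `x ≥ 2`,
`Ψ_{t+1}^R(1) = s·Ψ_t^L(0)`, `Ψ_{t+1}^R(0) = 0`. -/
noncomputable def psi (a b s : ℝ) : ℕ → ℕ → ℂ × ℂ
  | 0, x => if x = 0 then (1, 0) else (0, 0)
  | t + 1, x =>
      ((a : ℂ) * (psi a b s t (x + 1)).1 - (b : ℂ) * (psi a b s t (x + 1)).2,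
       if x = 0 then 0
       else if x = 1 then (s : ℂ) * (psi a b s t 0).1
       else (b : ℂ) * (psi a b s t (x - 1)).1 + (a : ℂ) * (psi a b s t (x - 1)).2)

/-- Position distribution `P(X_t = x) = |Ψ_t^L(x)|² + |Ψ_t^R(x)|²`. -/
noncomputable def prob (a b s : ℝ) (t x : ℕ) : ℝ :=
  ‖(psi a b s t x).1‖ ^ 2 + ‖(psi a b s t x).2‖ ^ 2

/-- scaled Catalan series -/
def catG : PowerSeries ℂ := PowerSeries.mk fun n => (((catalan n : ℝ) / 4 ^ n : ℝ) : ℂ)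

theorem cat_rec (n : ℕ) : ((catalan (n+1) : ℝ) / 4 ^ (n+1)) =
    (1/4) * ∑ ij ∈ Finset.HasAntidiagonal.antidiagonal n,
      ((catalan ij.1 : ℝ) / 4 ^ ij.1) * ((catalan ij.2 : ℝ) / 4 ^ ij.2) := by
  rw [catalan_succ']
  push_cast
  rw [Finset.sum_div, Finset.mul_sum]
  refine Finset.sum_congr rfl fun ij h => ?_
  rw [← Finset.HasAntidiagonal.mem_antidiagonal.mp h]
  field_simp
  ring

theorem cat_partial (N : ℕ) : ∑ n ∈ Finset.range N, ((catalan n : ℝ) / 4 ^ n) ≤ 2 := by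
  induction N with
  | zero => simp
  | succ N ih =>
    rw [Finset.sum_range_succ']
    simp only [cat_rec]
    rw [← Finset.mul_sum]
    have h0 : 0 ≤ ∑ n ∈ Finset.range N, ((catalan n : ℝ) / 4 ^ n) :=
      Finset.sum_nonneg fun _ _ => by positivity
    have h1 : ∑ n ∈ Finset.range N, ∑ ij ∈ Finset.HasAntidiagonal.antidiagonal n,
        ((catalan ij.1 : ℝ) / 4 ^ ij.1) * ((catalan ij.2 : ℝ) / 4 ^ ij.2) ≤
        (∑ n ∈ Finset.range N, ((catalan n : ℝ) / 4 ^ n)) *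
        (∑ n ∈ Finset.range N, ((catalan n : ℝ) / 4 ^ n)) := by
      rw [Finset.sum_mul_sum, ← Finset.sum_product']
      set g : ℕ × ℕ → ℝ := fun ij =>
        ((catalan ij.1 : ℝ) / 4 ^ ij.1) * ((catalan ij.2 : ℝ) / 4 ^ ij.2) with hg
      have hg0 : ∀ p, 0 ≤ g p := fun p => by simp only [hg]; positivity
      refine le_trans (Finset.sum_le_sum fun n hn => ?_)
        (Finset.sum_fiberwise_le_sum_of_sum_fiber_nonneg (s := Finset.range N ×ˢ Finset.range N)
          (t := Finset.range N) (g := fun p => p.1 + p.2) (f := g)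
          fun y _ => Finset.sum_nonneg fun p _ => hg0 p)
      refine Finset.sum_le_sum_of_subset_of_nonneg (fun p hp => ?_) fun p _ _ => hg0 p
      have h1 := Finset.HasAntidiagonal.mem_antidiagonal.mp hp
      have h2 := Finset.mem_range.mp hn
      simp only [Finset.mem_filter, Finset.mem_product, Finset.mem_range]
      omega
    simp
    nlinarith

theorem cat_summable : Summable fun n : ℕ => ((catalan n : ℝ) / 4 ^ n) :=
  summable_of_sum_range_le (fun _ => by positivity) cat_partial

theorem catG_eq : catG = 1 + PowerSeries.C (1/4) * PowerSeries.X * catG ^ 2 := by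
  ext n
  cases n with
  | zero => simp [catG]
  | succ n =>
    rw [mul_assoc, map_add, PowerSeries.coeff_C_mul, PowerSeries.coeff_succ_X_mul, sq,
      PowerSeries.coeff_mul]
    simp only [catG, PowerSeries.coeff_mk, cat_rec, PowerSeries.coeff_one]
    push_cast
    simp

/-- square root of `1 - X` -/
def sqA : PowerSeries ℂ := 1 - PowerSeries.C (1/2) * PowerSeries.X * catG

theorem sqA_sq : sqA ^ 2 = 1 - PowerSeries.X := by
  have h := catG_eq
  have h2 : (PowerSeries.C (1/2) : PowerSeries ℂ) * 2 = 1 := by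
    rw [← map_ofNat (PowerSeries.C (R := ℂ)) 2, ← map_mul]; norm_num
  have h4 : (PowerSeries.C (1/4) : PowerSeries ℂ) = PowerSeries.C (1/2) ^ 2 := by
    rw [← map_pow]; norm_num
  unfold sqA
  rw [h4] at h
  linear_combination (-PowerSeries.X) * h - PowerSeries.X * catG * h2

/-- absolutely summable coefficients -/
def AbsS (f : PowerSeries ℂ) : Prop := Summable fun n => ‖PowerSeries.coeff n f‖

/-- value at one -/
def ev (f : PowerSeries ℂ) : ℂ := ∑' n, PowerSeries.coeff n f

theorem AbsS.mul {f g : PowerSeries ℂ} (hf : AbsS f) (hg : AbsS g) : AbsS (f * g) := by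
  unfold AbsS at *
  simp only [PowerSeries.coeff_mul]
  exact summable_norm_sum_mul_antidiagonal_of_summable_norm
    (f := fun n => PowerSeries.coeff n f) (g := fun n => PowerSeries.coeff n g) hf hg

theorem ev_mul {f g : PowerSeries ℂ} (hf : AbsS f) (hg : AbsS g) : ev (f * g) = ev f * ev g := by
  unfold AbsS ev at *
  simp only [PowerSeries.coeff_mul]
  exact (tsum_mul_tsum_eq_tsum_sum_antidiagonal_of_summable_norm hf hg).symm

theorem AbsS.add {f g : PowerSeries ℂ} (hf : AbsS f) (hg : AbsS g) : AbsS (f + g) := by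
  unfold AbsS at *
  simp only [map_add]
  exact Summable.of_nonneg_of_le (fun _ => norm_nonneg _) (fun _ => norm_add_le _ _) (hf.add hg)

theorem ev_add {f g : PowerSeries ℂ} (hf : AbsS f) (hg : AbsS g) : ev (f + g) = ev f + ev g := by
  unfold AbsS ev at *
  simp only [map_add]
  exact (hf.of_norm).tsum_add (hg.of_norm)

theorem AbsS.C (r : ℂ) : AbsS (PowerSeries.C r) := by
  refine summable_of_ne_finset_zero (s := {0}) fun n hn => ?_
  simp at hn
  simp [PowerSeries.coeff_C, hn]

theorem ev_C (r : ℂ) : ev (PowerSeries.C r) = r := by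
  unfold ev
  rw [tsum_eq_single 0 (fun n hn => by simp [PowerSeries.coeff_C, hn])]
  simp

theorem AbsS.X : AbsS PowerSeries.X := by
  refine summable_of_ne_finset_zero (s := {1}) fun n hn => ?_
  simp at hn
  simp [PowerSeries.coeff_X, hn]

theorem ev_X : ev PowerSeries.X = 1 := by
  unfold ev
  rw [tsum_eq_single 1 (fun n hn => by simp [PowerSeries.coeff_X, hn])]
  simp

theorem absS_catG : AbsS catG := by
  unfold AbsS catG
  simp only [PowerSeries.coeff_mk, Complex.norm_real]
  exact cat_summable.norm

theorem sqA_eq : sqA = PowerSeries.C 1 + PowerSeries.C (-1/2) * PowerSeries.X * catG := by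
  unfold sqA
  rw [neg_div, map_neg, map_one]; ring

theorem absS_sqA : AbsS sqA := by
  rw [sqA_eq]
  exact (AbsS.C _).add (((AbsS.C _).mul AbsS.X).mul absS_catG)

theorem absS_rescale {f : PowerSeries ℂ} (hf : AbsS f) (η : ℂ) (hη : ‖η‖ = 1) :
    AbsS (PowerSeries.rescale η f) := by
  unfold AbsS at *
  simpa [PowerSeries.coeff_rescale, hη] using hf

theorem conj_coeff_sqA (n : ℕ) :
    (starRingEnd ℂ) (PowerSeries.coeff n sqA) = PowerSeries.coeff n sqA := by
  rw [sqA_eq, mul_assoc, map_add, PowerSeries.coeff_C_mul]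
  cases n with
  | zero => simp
  | succ n =>
    rw [PowerSeries.coeff_succ_X_mul]
    simp [catG, Complex.conj_ofNat]

theorem ev_conj (η : ℂ) : ev (PowerSeries.rescale ((starRingEnd ℂ) η) sqA) =
    (starRingEnd ℂ) (ev (PowerSeries.rescale η sqA)) := by
  unfold ev
  rw [Complex.conj_tsum]
  simp [PowerSeries.coeff_rescale, conj_coeff_sqA]

theorem rescale_sq (η : ℂ) : (PowerSeries.rescale η sqA) ^ 2 =
    1 - PowerSeries.C η * PowerSeries.X := by
  rw [← map_pow, sqA_sq, map_sub, map_one, PowerSeries.rescale_X]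

theorem exists_S (a b : ℝ) (hb : 0 < b) (hab : a ^ 2 + b ^ 2 = 1) :
    ∃ S : PowerSeries ℂ, AbsS S ∧ PowerSeries.constantCoeff S = 1 ∧
      ev S = 2 * b ∧
      S ^ 2 = (1 - PowerSeries.X ^ 2) ^ 2 + 4 * PowerSeries.C (b : ℂ) ^ 2 * PowerSeries.X ^ 2 := by
  set η : ℂ := a + b * Complex.I with hη
  have hn : ‖η‖ = 1 := by
    rw [hη, Complex.norm_add_mul_I, hab, Real.sqrt_one]
  have hc : (starRingEnd ℂ) η = a - b * Complex.I := by
    simp [hη, sub_eq_add_neg]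
  have hn' : ‖(starRingEnd ℂ) η‖ = 1 := by rw [RCLike.norm_conj, hn]
  set S1 := PowerSeries.rescale η sqA
  set S2 := PowerSeries.rescale (-η) sqA
  set S3 := PowerSeries.rescale ((starRingEnd ℂ) η) sqA
  set S4 := PowerSeries.rescale ((starRingEnd ℂ) (-η)) sqA
  have a1 : AbsS S1 := absS_rescale absS_sqA _ hn
  have a2 : AbsS S2 := absS_rescale absS_sqA _ (by rw [norm_neg, hn])
  have a3 : AbsS S3 := absS_rescale absS_sqA _ hn'
  have a4 : AbsS S4 := absS_rescale absS_sqA _ (by rw [map_neg, norm_neg, hn'])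
  have e3 : ev S3 = (starRingEnd ℂ) (ev S1) := ev_conj η
  have e4 : ev S4 = (starRingEnd ℂ) (ev S2) := ev_conj (-η)
  have hS : AbsS ((S1 * S2) * (S3 * S4)) := (a1.mul a2).mul (a3.mul a4)
  have habC : (PowerSeries.C (a : ℂ)) ^ 2 + PowerSeries.C (b : ℂ) ^ 2 = 1 := by
    rw [← map_pow, ← map_pow, ← map_add]
    have : (a : ℂ) ^ 2 + (b : ℂ) ^ 2 = 1 := by exact_mod_cast hab
    rw [this, map_one]
  have hI : (PowerSeries.C Complex.I) ^ 2 = -1 := by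
    rw [← map_pow, Complex.I_sq]; simp
  have hsq : ((S1 * S2) * (S3 * S4)) ^ 2 =
      (1 - PowerSeries.X ^ 2) ^ 2 + 4 * PowerSeries.C (b : ℂ) ^ 2 * PowerSeries.X ^ 2 := by
    rw [mul_pow, mul_pow, mul_pow, rescale_sq, rescale_sq, rescale_sq, rescale_sq]
    rw [map_neg (starRingEnd ℂ), hc, hη]
    simp only [map_neg, map_add, map_sub, map_mul]
    have key : ∀ A B J Y : PowerSeries ℂ, A ^ 2 + B ^ 2 = 1 → J ^ 2 = -1 →
      (1 - (A + B * J) * Y) * (1 - -(A + B * J) * Y) *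
      ((1 - (A - B * J) * Y) * (1 - -(A - B * J) * Y)) = (1 - Y ^ 2) ^ 2 + 4 * B ^ 2 * Y ^ 2 := by
      intro A B J Y h1 h2
      have e1 : (A + B * J) * (A - B * J) = 1 := by linear_combination h1 - B ^ 2 * h2
      have e2 : (A + B * J) ^ 2 + (A - B * J) ^ 2 = 2 - 4 * B ^ 2 := by
        linear_combination 2 * h1 + 2 * B ^ 2 * h2
      linear_combination (-Y ^ 2) * e2 + Y ^ 4 * ((A + B * J) * (A - B * J) + 1) * e1
    exact key _ _ _ _ habC hI
  refine ⟨_, hS, ?_, ?_, hsq⟩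
  · have h0 : PowerSeries.constantCoeff sqA = 1 := by simp [sqA]
    have hr : ∀ c : ℂ, PowerSeries.constantCoeff (PowerSeries.rescale c sqA) = 1 := by
      intro c
      rw [← PowerSeries.coeff_zero_eq_constantCoeff_apply, PowerSeries.coeff_rescale]
      simp [h0]
    simp [S1, S2, S3, S4, hr, -map_neg]
  · set v := ev S1 * ev S2 with hv
    have hev : ev ((S1 * S2) * (S3 * S4)) = ((Complex.normSq v : ℝ) : ℂ) := by
      rw [ev_mul (a1.mul a2) (a3.mul a4), ev_mul a1 a2, ev_mul a3 a4, e3, e4, ← map_mul,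
        Complex.mul_conj]
    have hD : ev (((S1 * S2) * (S3 * S4)) ^ 2) = 4 * (b : ℂ) ^ 2 := by
      have : (1 - PowerSeries.X ^ 2) ^ 2 + 4 * PowerSeries.C (b : ℂ) ^ 2 * PowerSeries.X ^ 2
        = (PowerSeries.C 1 + PowerSeries.C (-1) * (PowerSeries.X * PowerSeries.X)) *
          (PowerSeries.C 1 + PowerSeries.C (-1) * (PowerSeries.X * PowerSeries.X)) +
          PowerSeries.C (4 * (b : ℂ) ^ 2) * (PowerSeries.X * PowerSeries.X) := by
        simp only [map_mul, map_pow, map_neg, map_one, map_ofNat]; ring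
      rw [hsq, this]
      have hx := AbsS.X.mul AbsS.X
      have h1 := (AbsS.C 1).add ((AbsS.C (-1)).mul hx)
      rw [ev_add (h1.mul h1) ((AbsS.C _).mul hx), ev_mul h1 h1,
        ev_add (AbsS.C 1) ((AbsS.C (-1)).mul hx), ev_mul (AbsS.C _) hx, ev_mul (AbsS.C _) hx,
        ev_mul AbsS.X AbsS.X, ev_C, ev_C, ev_C, ev_X]
      ring
    rw [sq, ev_mul hS hS, hev] at hD
    have hD' : Complex.normSq v * Complex.normSq v = 4 * b ^ 2 := by exact_mod_cast hD
    have hnn := Complex.normSq_nonneg v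
    have : Complex.normSq v = 2 * b := by nlinarith
    rw [hev, this]; push_cast; ring

theorem psi_gen (a b : ℝ) (hb : 0 < b) (hab : a ^ 2 + b ^ 2 = 1) :
    ∃ U V : PowerSeries ℂ, (∀ t, (psi a b (-1) t 0).1 = PowerSeries.coeff t U) ∧
      AbsS V ∧ ev V = 2 * b / (1 + b) ∧ (1 - PowerSeries.X ^ 2) * U = V := by
  obtain ⟨S, hS, hS0, hS1, hSS⟩ := exists_S a b hb hab
  have hb' : (b : ℂ) ≠ 0 := by exact_mod_cast hb.ne'
  have hb1 : (1 + b : ℂ) ≠ 0 := by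
    have : (1 + b : ℝ) ≠ 0 := by positivity
    exact_mod_cast this
  set B : PowerSeries ℂ := PowerSeries.C (b : ℂ) with hB
  set A : PowerSeries ℂ := PowerSeries.C (a : ℂ) with hA
  set H : PowerSeries ℂ := PowerSeries.C ((2 * b : ℂ)⁻¹) with hH
  have hHB : 2 * B * H = 1 := by
    rw [hB, hH, ← map_ofNat (PowerSeries.C (R := ℂ)) 2, ← map_mul, ← map_mul,
      mul_inv_cancel₀ (by simp [hb']), map_one]
  have habC : A ^ 2 + B ^ 2 = 1 := by
    rw [hA, hB, ← map_pow, ← map_pow, ← map_add]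
    have : (a : ℂ) ^ 2 + (b : ℂ) ^ 2 = 1 := by exact_mod_cast hab
    rw [this, map_one]
  set X : PowerSeries ℂ := PowerSeries.X with hX
  set W : PowerSeries ℂ := H * (1 - X ^ 2 - S) with hW
  have hW0 : PowerSeries.constantCoeff W = 0 := by simp [hW, hS0, hX]
  have hWq : B * W ^ 2 + (X ^ 2 - 1) * W - B * X ^ 2 = 0 := by
    have h1 : S = 1 - X ^ 2 - 2 * B * W := by
      rw [hW]; linear_combination (1 - X ^ 2 - S) * hHB
    rw [h1] at hSS
    linear_combination H ^ 2 * B * hSS -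
      (2 * B * H + 1) * (B * W ^ 2 + (X ^ 2 - 1) * W - B * X ^ 2) * hHB
  have hu1 : (1 + W) * (1 + W)⁻¹ = 1 := PowerSeries.mul_inv_cancel _ (by simp [hW0])
  have hu2 : (1 - B * W) * (1 - B * W)⁻¹ = 1 := PowerSeries.mul_inv_cancel _ (by simp [hW0])
  set U := (1 + W)⁻¹ with hU
  set M := (1 - B * W)⁻¹ with hM
  set T := A * X * M with hT
  have hT1 : T * (1 - B * W) = A * X := by rw [hT]; linear_combination A * X * hu2
  have hT2 : W = X * A * W * T - B * X ^ 2 := by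
    have h : (1 - B * W) * (W - (X * A * W * T - B * X ^ 2)) = 0 := by
      linear_combination (-X * A * W) * hT1 - hWq - X ^ 2 * W * habC
    have : W - (X * A * W * T - B * X ^ 2) = 0 := by
      linear_combination M * h - (W - (X * A * W * T - B * X ^ 2)) * hu2
    linear_combination this
  let Q : ℕ → PowerSeries ℂ := fun x => -U * T ^ x
  let Lh : ℕ → PowerSeries ℂ := fun x => (if x = 0 then 1 else 0) + W * Q x
  let Rh : ℕ → PowerSeries ℂ := fun x => if x = 0 then 0 else X * Q (x - 1)
  have hL0 : Lh 0 = U := by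
    simp only [Lh, Q, if_true, pow_zero]
    linear_combination -hu1
  have recL : ∀ x, Lh x = (if x = 0 then 1 else 0) + X * (A * Lh (x+1) - B * Rh (x+1)) := by
    intro x
    simp only [Lh, Rh, Q, Nat.add_sub_cancel, Nat.succ_ne_zero, if_false]
    linear_combination (-U * T ^ x) * hT2
  have recR1 : Rh 1 = X * (-1 * Lh 0) := by
    rw [hL0]; simp only [Rh, Q]; simp
  have recR : ∀ x, Rh (x + 2) = X * (B * Lh (x + 1) + A * Rh (x + 1)) := by
    intro x
    simp only [Lh, Rh, Q, Nat.add_sub_cancel, Nat.succ_ne_zero, if_false,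
      show x + 2 - 1 = x + 1 by omega]
    linear_combination (-X * U * T ^ x) * hT1
  have main : ∀ t x, (psi a b (-1) t x).1 = PowerSeries.coeff t (Lh x) ∧
      (psi a b (-1) t x).2 = PowerSeries.coeff t (Rh x) := by
    intro t
    induction t with
    | zero =>
      intro x
      constructor
      · rw [recL]
        by_cases h : x = 0 <;> simp [psi, h, hX]
      · by_cases h : x = 0 <;> simp [psi, h, hX, Rh]
    | succ t ih =>
      intro x
      constructor
      · rw [recL, map_add, hX, PowerSeries.coeff_succ_X_mul, map_sub, hA, hB,
          PowerSeries.coeff_C_mul, PowerSeries.coeff_C_mul, ← (ih (x+1)).1, ← (ih (x+1)).2]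
        by_cases h : x = 0 <;> simp [psi, h, PowerSeries.coeff_one]
      · match x with
        | 0 => simp [psi, Rh]
        | 1 =>
          rw [recR1, hX, PowerSeries.coeff_succ_X_mul]
          simp [psi, (ih 0).1]
        | x + 2 =>
          rw [recR, hX, PowerSeries.coeff_succ_X_mul, map_add, hA, hB,
            PowerSeries.coeff_C_mul, PowerSeries.coeff_C_mul, ← (ih (x+1)).1, ← (ih (x+1)).2]
          simp [psi]
  set K : PowerSeries ℂ := PowerSeries.C ((2 * (1 + b) : ℂ)⁻¹) with hK
  have hKB : 2 * (1 + B) * K = 1 := by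
    have : (2 : PowerSeries ℂ) * (1 + B) = PowerSeries.C (2 * (1 + b) : ℂ) := by
      simp [hB, map_ofNat]
    rw [this, hK, ← map_mul, mul_inv_cancel₀ (by simp [hb1]), map_one]
  refine ⟨U, K * (PowerSeries.C (2 * b + 1 : ℂ) + (PowerSeries.C (-1) * (X * X) + S)),
    fun t => by rw [(main t 0).1, hL0], ?_, ?_, ?_⟩
  · exact (AbsS.C _).mul ((AbsS.C _).add (((AbsS.C _).mul (AbsS.X.mul AbsS.X)).add hS))
  · have hx := AbsS.X.mul AbsS.X
    have h1 := (AbsS.C (-1)).mul hx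
    rw [ev_mul (AbsS.C _) ((AbsS.C _).add (h1.add hS)), ev_add (AbsS.C _) (h1.add hS),
      ev_add h1 hS, ev_mul (AbsS.C _) hx, ev_mul AbsS.X AbsS.X, ev_C, ev_C, ev_C, ev_X, hS1]
    field_simp
    ring
  · have e : (PowerSeries.C (2 * b + 1 : ℂ) + (PowerSeries.C (-1) * (X * X) + S))
        = 2 * B + 1 - X ^ 2 + S := by
      simp only [map_add, map_mul, map_neg, map_one, map_ofNat, hB]; ring
    rw [e]
    have h1 : S = 1 - X ^ 2 - 2 * B * W := by
      rw [hW]; linear_combination (1 - X ^ 2 - S) * hHB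
    have h2 : (1 + W) * (2 * B + 1 - X ^ 2 + S) = 2 * (1 + B) * (1 - X ^ 2) := by
      rw [h1]; linear_combination (-2) * hWq
    linear_combination (-(1 - X ^ 2) * U) * hKB - K * U * h2
      + K * (2 * B + 1 - X ^ 2 + S) * hu1

theorem psi_parity (a b s : ℝ) (t : ℕ) : ∀ x, Odd (t + x) → psi a b s t x = (0, 0) := by
  induction t with
  | zero =>
    intro x hx
    have : x ≠ 0 := by rintro rfl; simp at hx
    simp [psi, this]
  | succ t ih =>
    intro x hx
    have h1 := ih (x + 1) (by convert hx using 1; ring)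
    match x with
    | 0 => simp [psi, h1]
    | 1 =>
      have h0 := ih 0 (by rw [Nat.odd_iff] at *; omega)
      simp [psi, h1, h0]
    | x + 2 =>
      have h0 := ih (x + 1) (by rw [Nat.odd_iff] at *; omega)
      simp [psi, h1, h0]

theorem lim_zero (a b : ℝ) (hb : 0 < b) (hab : a ^ 2 + b ^ 2 = 1) :
    Tendsto (fun t : ℕ => (psi a b (-1) (2 * t) 0).1) atTop (𝓝 (2 * b / (1 + b))) := by
  obtain ⟨U, V, hU, hV, hV1, hUV⟩ := psi_gen a b hb hab
  have hodd : ∀ t, PowerSeries.coeff (2 * t + 1) U = 0 := by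
    intro t
    rw [← hU, psi_parity _ _ _ _ _ (by simp)]
  have hc : ∀ n, PowerSeries.coeff (n + 2) V =
      PowerSeries.coeff (n + 2) U - PowerSeries.coeff n U := by
    intro n
    rw [← hUV, sub_mul, one_mul, map_sub, PowerSeries.coeff_X_pow_mul]
  have hc0 : PowerSeries.coeff 0 V = PowerSeries.coeff 0 U := by
    rw [← hUV]; simp
  have hc1 : PowerSeries.coeff 1 V = PowerSeries.coeff 1 U := by
    rw [← hUV, sub_mul, one_mul, map_sub, PowerSeries.coeff_X_pow_mul']; simp
  have hsum : ∀ t, ∑ n ∈ Finset.range (2 * t + 1), PowerSeries.coeff n V =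
      PowerSeries.coeff (2 * t) U := by
    intro t
    induction t with
    | zero => rw [mul_zero, zero_add, Finset.sum_range_one, hc0]
    | succ t ih =>
      have hz : PowerSeries.coeff (2 * t + 1) V = 0 := by
        cases t with
        | zero => rw [mul_zero, zero_add, hc1]; exact hodd 0
        | succ t =>
          rw [show 2 * (t + 1) + 1 = (2 * t + 1) + 2 by ring, hc,
            show 2 * t + 1 + 2 = 2 * (t + 1) + 1 by ring, hodd, hodd, sub_zero]
      rw [show 2 * (t + 1) + 1 = 2 * t + 1 + 1 + 1 by ring, Finset.sum_range_succ,
        Finset.sum_range_succ, ih, hz, show 2 * t + 1 + 1 = 2 * t + 2 by ring, hc,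
        show 2 * (t + 1) = 2 * t + 2 by ring]
      ring
  have h := (hV.of_norm).hasSum.tendsto_sum_nat
  have h2 : Tendsto (fun t : ℕ => 2 * t + 1) atTop atTop :=
    tendsto_atTop_mono (fun t => by show t ≤ 2 * t + 1; omega) tendsto_id
  have h3 := h.comp h2
  rw [show (∑' n, PowerSeries.coeff n V) = 2 * (b : ℂ) / (1 + b) from hV1] at h3
  refine h3.congr fun t => ?_
  rw [Function.comp, hsum, hU]

/-- Limits at every site, along times of the right parity. -/
theorem lim_all (a b q : ℝ) (hb : 0 < b) (hab : a ^ 2 + b ^ 2 = 1) (ha : a ≠ 0)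
    (hq : 1 - b = a * q) (hq' : a = (1 + b) * q) (x : ℕ) :
    Tendsto (fun t : ℕ => (psi a b (-1) (2 * t + x) x).1) atTop
      (𝓝 (2 * b / (1 + b) * (q : ℂ) ^ x)) ∧
    Tendsto (fun t : ℕ => (psi a b (-1) (2 * t + (x + 1)) (x + 1)).2) atTop
      (𝓝 (-(2 * b / (1 + b) * (q : ℂ) ^ x))) := by
  have hac : (a : ℂ) ≠ 0 := by exact_mod_cast ha
  have hqc : 1 - (b : ℂ) = a * q := by exact_mod_cast hq
  have hqc' : (a : ℂ) = (1 + b) * q := by exact_mod_cast hq'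
  induction x with
  | zero =>
    refine ⟨by simpa using lim_zero a b hb hab, ?_⟩
    have := (lim_zero a b hb hab).neg
    refine (Tendsto.congr (fun t => ?_) this).trans (by simp)
    simp [psi]
  | succ x ih =>
    obtain ⟨h1, h2⟩ := ih
    have h1s := h1.comp (tendsto_add_atTop_nat 1)
    have hL : Tendsto (fun t : ℕ => (psi a b (-1) (2 * t + (x + 1)) (x + 1)).1) atTop
      (𝓝 (2 * b / (1 + b) * (q : ℂ) ^ (x + 1))) := by
      have h := (h1s.add (h2.const_mul (b : ℂ))).div_const (a : ℂ)
      have e : (2 * b / (1 + b) * (q : ℂ) ^ x + b * (-(2 * b / (1 + b) * (q : ℂ) ^ x))) / a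
        = 2 * b / (1 + b) * (q : ℂ) ^ (x + 1) := by
        rw [div_eq_iff hac, pow_succ]
        linear_combination (2 * b / (1 + b) * (q : ℂ) ^ x) * hqc
      rw [e] at h
      refine h.congr fun t => ?_
      have : (psi a b (-1) (2 * (t + 1) + x) x).1 =
        a * (psi a b (-1) (2 * t + (x + 1)) (x + 1)).1
          - b * (psi a b (-1) (2 * t + (x + 1)) (x + 1)).2 := by
        rw [show 2 * (t + 1) + x = (2 * t + (x + 1)) + 1 by ring]
        simp [psi]
      simp only [Function.comp]
      rw [this]
      field_simp
      ring
    refine ⟨hL, ?_⟩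
    have h := (hL.const_mul (b : ℂ)).add (h2.const_mul (a : ℂ))
    have e : b * (2 * b / (1 + b) * (q : ℂ) ^ (x + 1)) + a * (-(2 * b / (1 + b) * (q : ℂ) ^ x))
        = -(2 * b / (1 + b) * (q : ℂ) ^ (x + 1)) := by
      rw [pow_succ]
      linear_combination (-(2 * b / (1 + b) * (q : ℂ) ^ x)) * hqc'
    rw [e] at h
    refine h.congr fun t => ?_
    rw [show 2 * t + (x + 1 + 1) = (2 * t + (x + 1)) + 1 by ring]
    simp [psi]

theorem half_line_caseB_even_time_localization
    (κ : ℕ) (hκ : 3 ≤ κ) (a b : ℝ)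
    (ha : a = 2 * Real.sqrt ((κ : ℝ) - 1) / κ) (hb : b = ((κ : ℝ) - 2) / κ)
    (x : ℕ) :
    Tendsto (fun t : ℕ => prob a b (-1) (2 * t) x) atTop
      (𝓝 (if x = 0 then (((κ : ℝ) - 2) / ((κ : ℝ) - 1)) ^ 2
        else if Even x then
          (κ : ℝ) * (((κ : ℝ) - 2) / ((κ : ℝ) - 1)) ^ 2 * (1 / ((κ : ℝ) - 1)) ^ x
        else 0)) := by
  have hk : (3 : ℝ) ≤ κ := by exact_mod_cast hκ
  have hk0 : (κ : ℝ) ≠ 0 := by positivity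
  have hk1 : (0 : ℝ) < (κ : ℝ) - 1 := by linarith
  have hk1' := hk1.ne'
  set r := Real.sqrt ((κ : ℝ) - 1) with hr
  have hrp : 0 < r := Real.sqrt_pos.mpr hk1
  have hr2 : r ^ 2 = (κ : ℝ) - 1 := Real.sq_sqrt hk1.le
  have hkr : (κ : ℝ) = r ^ 2 + 1 := by linarith
  have hb0 : 0 < b := by rw [hb]; apply div_pos <;> linarith
  have ha0 : a ≠ 0 := by rw [ha]; positivity
  have hab : a ^ 2 + b ^ 2 = 1 := by
    rw [ha, hb, hkr]
    field_simp
    ring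
  have hq : 1 - b = a * (1 / r) := by
    rw [ha, hb]; field_simp; ring
  have hq' : a = (1 + b) * (1 / r) := by
    rw [ha, hb]; field_simp; rw [hr2]; ring
  have hcr : 2 * b / (1 + b) = ((κ : ℝ) - 2) / ((κ : ℝ) - 1) := by
    have h1 : 1 + b ≠ 0 := by positivity
    rw [div_eq_div_iff h1 hk1', hb]; field_simp; ring
  set c := ((κ : ℝ) - 2) / ((κ : ℝ) - 1) with hc
  have hcc : 2 * (b : ℂ) / (1 + b) = (c : ℂ) := by
    rw [← hcr]; push_cast; rfl
  have lim := lim_all a b (1 / r) hb0 hab ha0 hq hq'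
  rw [hcc] at lim
  split_ifs with hx0 hxe
  · subst hx0
    have h := ((lim 0).1.norm.pow 2)
    have e : ‖(c : ℂ) * ((1 / r : ℝ) : ℂ) ^ 0‖ ^ 2 = c ^ 2 := by
      rw [pow_zero, mul_one, Complex.norm_real, Real.norm_eq_abs, sq_abs]
    rw [e] at h
    refine h.congr fun t => ?_
    have : (psi a b (-1) (2 * t) 0).2 = 0 := by cases t <;> simp [psi, Nat.mul_succ]
    simp [prob, this]
  · obtain ⟨y, rfl⟩ := Nat.exists_eq_succ_of_ne_zero hx0
    obtain ⟨m, hm⟩ := hxe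
    have h := ((lim (y + 1)).1.norm.pow 2).add ((lim y).2.norm.pow 2)
    have e : ‖(c : ℂ) * ((1 / r : ℝ) : ℂ) ^ (y + 1)‖ ^ 2 +
        ‖-((c : ℂ) * ((1 / r : ℝ) : ℂ) ^ y)‖ ^ 2
        = (κ : ℝ) * c ^ 2 * (1 / ((κ : ℝ) - 1)) ^ (y + 1) := by
      rw [norm_neg, ← Complex.ofReal_pow, ← Complex.ofReal_pow, ← Complex.ofReal_mul,
        ← Complex.ofReal_mul, Complex.norm_real, Complex.norm_real, Real.norm_eq_abs,
        Real.norm_eq_abs, sq_abs, sq_abs, ← hr2]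
      have key : (1 / r ^ 2) ^ y = ((1 / r) ^ y) ^ 2 := by
        rw [← one_div_pow, ← pow_mul, ← pow_mul, mul_comm]
      rw [pow_succ (1 / r) y, pow_succ (1 / r ^ 2) y, key, hkr]
      clear_value c
      generalize (1 / r) ^ y = w
      field_simp
      ring
    rw [e] at h
    rw [← tendsto_add_atTop_iff_nat m]
    refine h.congr fun t => ?_
    rw [show 2 * (t + m) = 2 * t + (y + 1) by omega]
    rfl
  · have : ∀ t, prob a b (-1) (2 * t) x = 0 := by
      intro t
      have := psi_parity a b (-1) (2 * t) x (by
        rw [Nat.not_even_iff_odd] at hxe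
        exact (even_two_mul t).add_odd hxe)
      simp [prob, this]
    simp [this]

end
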